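/- Let A be a piecewise-Koszul algebra with period p and jump degree d, let J = ⊕_{i≥1} A_i be the graded Jacobson radical, and let M be a piecewise-Koszul A-module generated in degree s. Then for every n ≥ 1, the (pn−1)-st syzygy Ω^{pn−1}(JM) of JM (in a minimal graded projective resolution) is a piecewise-Koszul module. -/

import Mathlib

noncomputable section

/-- The jump function `δ^d_p(n) = ((n − (n mod p))/p)·d + (n mod p)`. -/
def jump (d p n : ℕ) : ℕ := (n - n % p) / p * d + n % p

/-- A positively graded `F`-algebra `A = ⊕_{i≥0} A_i`. -/
structure GradedAlg (F : Type) [Field F] where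
  A : Type
  [ringA : Ring A]
  [algA : Algebra F A]
  grading : ℕ → Submodule F A
  [graded : GradedAlgebra grading]

attribute [instance] GradedAlg.ringA GradedAlg.algA GradedAlg.graded

namespace GradedAlg

variable {F : Type} [Field F] (𝒜 : GradedAlg F)

/-- The graded Jacobson radical `J = ⊕_{i≥1} A_i`, i.e. the irrelevant ideal. -/
def jideal : Ideal 𝒜.A := (HomogeneousIdeal.irrelevant 𝒜.grading).toIdeal

/-- The standing assumptions: `A_0` is a semisimple Artin algebra, `A` is generated in
degrees 0 and 1 (`A_i · A_j = A_{i+j}`), and `A_1` is finite dimensional over `F`. -/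
structure Standing : Prop where
  semisimple : IsSemisimpleRing ↥(𝒜.grading 0)
  artinian : IsArtinianRing ↥(𝒜.grading 0)
  gen01 : ∀ i j : ℕ, 𝒜.grading i * 𝒜.grading j = 𝒜.grading (i + j)
  findim : FiniteDimensional F ↥(𝒜.grading 1)

/-- A (ℤ-)graded module over the graded algebra `𝒜`. -/
structure GMod where
  M : Type
  [acg : AddCommGroup M]
  [modF : Module F M]
  [modA : Module 𝒜.A M]
  [tower : IsScalarTower F 𝒜.A M]
  [scomm : SMulCommClass 𝒜.A F M]
  grading : ℤ → Submodule F M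
  sup_eq_top : (⨆ j : ℤ, grading j) = ⊤
  indep : iSupIndep grading
  smul_mem : ∀ {i : ℕ} {j : ℤ} {a : 𝒜.A} {m : M},
    a ∈ 𝒜.grading i → m ∈ grading j → a • m ∈ grading ((i : ℤ) + j)

attribute [instance] GMod.acg GMod.modF GMod.modA GMod.tower GMod.scomm

variable {𝒜}

/-- A degree-zero morphism of graded modules. -/
structure GHom (M N : 𝒜.GMod) where
  lin : M.M →ₗ[𝒜.A] N.M
  grad : ∀ (j : ℤ) (x : M.M), x ∈ M.grading j → lin x ∈ N.grading j

/-- A graded module is generated in degree `s` if `A · M_s = M`. -/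
def GMod.GenInDeg (M : 𝒜.GMod) (s : ℤ) : Prop :=
  Submodule.span 𝒜.A (M.grading s : Set M.M) = ⊤

/-- `T` is the trivial graded module `A_0 = A/J`, concentrated in degree `0`. -/
def IsTrivialGMod (T : 𝒜.GMod) : Prop :=
  (∀ j : ℤ, j ≠ 0 → T.grading j = ⊥) ∧
    Nonempty (T.M ≃ₗ[𝒜.A] (𝒜.A ⧸ 𝒜.jideal))

/-- A minimal graded projective resolution
`⋯ → P_{n+1} → P_n → ⋯ → P_0 → M → 0` of the graded module `M`,
with finitely generated terms. -/
structure MinRes (M : 𝒜.GMod) where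
  P : ℕ → 𝒜.GMod
  d : ∀ n : ℕ, GHom (P (n + 1)) (P n)
  aug : GHom (P 0) M
  fg : ∀ n, Module.Finite 𝒜.A (P n).M
  projective : ∀ n, Module.Projective 𝒜.A (P n).M
  aug_surj : Function.Surjective aug.lin
  exact_aug : LinearMap.range (d 0).lin = LinearMap.ker aug.lin
  exact : ∀ n, LinearMap.range (d (n + 1)).lin = LinearMap.ker (d n).lin
  minimal : ∀ n, LinearMap.range (d n).lin ≤ 𝒜.jideal • (⊤ : Submodule 𝒜.A (P n).M)

variable (𝒜)

/-- `M` is a piecewise-Koszul module (period `p`, jump degree `d`, shift `s`):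
it has a minimal graded projective resolution with `P_n` generated in degree `δ^d_p(n) + s`. -/
def IsPKMod (p d : ℕ) (s : ℤ) (M : 𝒜.GMod) : Prop :=
  ∃ R : MinRes M, ∀ n : ℕ, (R.P n).GenInDeg ((jump d p n : ℤ) + s)

/-- `A` is a piecewise-Koszul algebra (period `p`, jump degree `d`): the trivial module `T`
admits a minimal graded projective resolution with `P_n` generated in degree `δ^d_p(n)`. -/
def IsPKAlg (p d : ℕ) (T : 𝒜.GMod) : Prop := IsPKMod 𝒜 p d 0 T

/-- A Koszul module: a minimal graded projective resolution with `P_n` generated in degree `n`. -/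
def IsKoszulMod (M : 𝒜.GMod) : Prop :=
  ∃ R : MinRes M, ∀ n : ℕ, (R.P n).GenInDeg (n : ℤ)

variable {𝒜}

section Ext

variable (T : 𝒜.GMod) {M : 𝒜.GMod}

/-- The space of `A`-linear maps `P_n → T` (cochains). -/
abbrev HomSp (R : MinRes M) (n : ℕ) := (R.P n).M →ₗ[𝒜.A] T.M

/-- Precomposition, as an `F`-linear map on cochains. -/
def precompF {M₁ M₂ : 𝒜.GMod} (g : M₁.M →ₗ[𝒜.A] M₂.M) :
    (M₂.M →ₗ[𝒜.A] T.M) →ₗ[F] (M₁.M →ₗ[𝒜.A] T.M) where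
  toFun f := f ∘ₗ g
  map_add' f₁ f₂ := by ext x; simp
  map_smul' c f := by ext x; simp

/-- Cocycles: maps `P_n → T` vanishing on the image of `P_{n+1}`. -/
def cocyc (R : MinRes M) (n : ℕ) : Submodule F (HomSp T R n) :=
  LinearMap.ker (precompF T (R.d n).lin)

/-- Coboundaries: maps `P_n → T` factoring through `d_{n-1}`. -/
def cobound (R : MinRes M) : (n : ℕ) → Submodule F (HomSp T R n)
  | 0 => ⊥
  | n + 1 => LinearMap.range (precompF T (R.d n).lin)

/-- The coboundaries, viewed inside the cocycles. -/
def extRel (R : MinRes M) (n : ℕ) : Submodule F ↥(cocyc T R n) :=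
  (cobound T R n).comap (cocyc T R n).subtype

/-- `Ext^n_A(M, T)`, computed from the resolution `R` of `M`. -/
abbrev ExtQ (R : MinRes M) (n : ℕ) := ↥(cocyc T R n) ⧸ extRel T R n

/-- The class in `Ext^n_A(M,T)` of a cocycle. -/
def extCls {R : MinRes M} {n : ℕ} {f : HomSp T R n} (hf : f ∈ cocyc T R n) :
    ExtQ T R n :=
  Submodule.Quotient.mk ⟨f, hf⟩

/-- Cochains of shift-degree `j`: maps `P_n → T` vanishing on every `(P_n)_i` with `i ≠ j`. -/
def homDeg (R : MinRes M) (n : ℕ) (j : ℤ) : Submodule F (HomSp T R n) where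
  carrier := {f | ∀ i : ℤ, i ≠ j → ∀ x ∈ (R.P n).grading i, f x = 0}
  add_mem' := fun hf hg i hi x hx => by
    simp only [LinearMap.add_apply, hf i hi x hx, hg i hi x hx, add_zero]
  zero_mem' := fun i hi x hx => rfl
  smul_mem' := fun c f hf i hi x hx => by
    simp only [LinearMap.smul_apply, hf i hi x hx, smul_zero]

/-- The shift-degree `j` component `Ext^n_A(M,T)_j`. -/
def extComp (R : MinRes M) (n : ℕ) (j : ℤ) : Submodule F (ExtQ T R n) :=
  Submodule.map (extRel T R n).mkQ ((homDeg T R n j).comap (cocyc T R n).subtype)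

/-- Transport `Ext` along an equality of cohomological degrees. -/
def extCast (R : MinRes M) {a b : ℕ} (h : a = b) : ExtQ T R a ≃ₗ[F] ExtQ T R b :=
  h ▸ LinearEquiv.refl F (ExtQ T R a)

/-- A chain map lifting of a cochain `g : P_j → T` over the resolutions `RM` of `M`
and `RT` of `T`. -/
structure ChainLift (RT : MinRes T) (RM : MinRes M) (j : ℕ)
    (g : (RM.P j).M →ₗ[𝒜.A] T.M) where
  ℓ : ∀ m k : ℕ, m = k + j → ((RM.P m).M →ₗ[𝒜.A] (RT.P k).M)
  comm_aug : RT.aug.lin ∘ₗ ℓ j 0 (by omega) = g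
  comm : ∀ k : ℕ, (RT.d k).lin ∘ₗ ℓ (k + j + 1) (k + 1) (by omega) =
    ℓ (k + j) k rfl ∘ₗ (RM.d (k + j)).lin

/-- `μ` is the (bigraded family of) Yoneda product(s)
`Ext^i(T,T) ⊗ Ext^j(M,T) → Ext^{i+j}(M,T)`: it is computed by composing a cocycle
`f : P_i → T` with a chain lifting of a cocycle `g : Q_j → T`. -/
def IsYonedaMul (RT : MinRes T) (RM : MinRes M)
    (μ : ∀ i j : ℕ, ExtQ T RT i →ₗ[F] ExtQ T RM j →ₗ[F] ExtQ T RM (i + j)) : Prop :=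
  ∀ (i j : ℕ) (f : HomSp T RT i) (hf : f ∈ cocyc T RT i)
    (g : HomSp T RM j) (hg : g ∈ cocyc T RM j)
    (L : ChainLift T RT RM j g)
    (hc : f ∘ₗ L.ℓ (i + j) i (by omega) ∈ cocyc T RM (i + j)),
    μ i j (extCls T hf) (extCls T hg) = extCls T hc

/-- `E(A) = Ext^*_A(A_0,A_0)` is generated in the ext-degrees belonging to `S`. -/
def ExtGenIn (RT : MinRes T)
    (μ : ∀ i j : ℕ, ExtQ T RT i →ₗ[F] ExtQ T RT j →ₗ[F] ExtQ T RT (i + j))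
    (S : Set ℕ) : Prop :=
  ∀ W : (n : ℕ) → Submodule F (ExtQ T RT n),
    (∀ n ∈ S, W n = ⊤) →
    (∀ (i j : ℕ) (x : ExtQ T RT i) (y : ExtQ T RT j),
      x ∈ W i → y ∈ W j → μ i j x y ∈ W (i + j)) →
    ∀ n, W n = ⊤

/-- `E(M) = Ext^*_A(M,A_0)` is generated in degree `0` as a graded `E(A)`-module. -/
def ExtModGenInZero (RT : MinRes T) (RM : MinRes M)
    (μ : ∀ i j : ℕ, ExtQ T RT i →ₗ[F] ExtQ T RM j →ₗ[F] ExtQ T RM (i + j)) : Prop :=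
  ∀ W : (n : ℕ) → Submodule F (ExtQ T RM n),
    W 0 = ⊤ →
    (∀ (i j : ℕ) (x : ExtQ T RT i) (y : ExtQ T RM j),
      y ∈ W j → μ i j x y ∈ W (i + j)) →
    ∀ n, W n = ⊤

end Ext

/-- `JM` is (a graded module isomorphic to) the submodule `J·M` of `M`. -/
def IsJM (M JM : 𝒜.GMod) : Prop :=
  ∃ e : JM.M ≃ₗ[𝒜.A] ↥(𝒜.jideal • (⊤ : Submodule 𝒜.A M.M)),
    ∀ (j : ℤ) (x : JM.M), x ∈ JM.grading j ↔ ((e x : M.M) ∈ M.grading j)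

/-- `Q` is (a graded module isomorphic to) the quotient `M/JM`. -/
def IsQuotJM (M Q : 𝒜.GMod) : Prop :=
  ∃ e : Q.M ≃ₗ[𝒜.A] (M.M ⧸ (𝒜.jideal • (⊤ : Submodule 𝒜.A M.M))),
    ∀ j : ℤ, Q.grading j = Submodule.map
      ((e.symm.toLinearMap ∘ₗ (𝒜.jideal • (⊤ : Submodule 𝒜.A M.M)).mkQ).restrictScalars F)
      (M.grading j)

/-- `W` is (isomorphic to) the `n`-th syzygy `Ω^n(M)` of `M` in the minimal graded
projective resolution `R`. -/
def IsSyzygy {M : 𝒜.GMod} (R : MinRes M) : ℕ → 𝒜.GMod → Prop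
  | 0, W => ∃ e : W.M ≃ₗ[𝒜.A] M.M,
      ∀ (j : ℤ) (x : W.M), x ∈ W.grading j ↔ e x ∈ M.grading j
  | 1, W => ∃ e : W.M ≃ₗ[𝒜.A] ↥(LinearMap.ker R.aug.lin),
      ∀ (j : ℤ) (x : W.M), x ∈ W.grading j ↔ ((e x : (R.P 0).M) ∈ (R.P 0).grading j)
  | (n + 2), W => ∃ e : W.M ≃ₗ[𝒜.A] ↥(LinearMap.ker (R.d n).lin),
      ∀ (j : ℤ) (x : W.M), x ∈ W.grading j ↔ ((e x : (R.P (n + 1)).M) ∈ (R.P (n + 1)).grading j)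

end GradedAlg

/-!
Write `Tor_n(N)` for `Tor_n^A(A/J, N)`; its degrees are those of the generators of the `n`-th term
of a minimal resolution of `N`. As `M/JM` is a direct summand of a power of `A/J` shifted to degree
`s`, `Tor_{n+1}(M/JM)` lives in degree `δ(n+1) + s`, while `Tor_n(M)` lives in degree `δ(n) + s`.
The long exact sequence of `0 → JM → M → M/JM → 0` leaves only these two degrees for `Tor_n(JM)`.
The second one does not occur: for `n = 0` because the map `JM/J²M → M/JM` vanishes, and for `n > 0`
because by induction the previous term of the minimal resolution of `JM` is generated in that
degree. Hence the terms of the resolution of `Ω^{pn-1}(JM)` are generated in degrees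
`δ(pn+k) + s = δ(k) + (nd + s)`.

The long exact sequence enters as the mapping cone of a lift of `JM → M`, which resolves `M/JM`; the
concentration of `Tor(M/JM)` comes from comparing this cone with the resolution of `A/J`: its
identity is homotopic to a sum of maps that factor through that resolution.
-/

namespace GradedAlg

section Module

variable {A : Type*} [Ring A]

theorem exists_comp_eq_of_range_le {P X Y : Type*} [AddCommGroup P] [Module A P]
    [Module.Projective A P] [AddCommGroup X] [Module A X] [AddCommGroup Y] [Module A Y]
    {f : P →ₗ[A] Y} {g : X →ₗ[A] Y} (hfg : LinearMap.range f ≤ LinearMap.range g) :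
    ∃ h : P →ₗ[A] X, g ∘ₗ h = f := by
  obtain ⟨h, hh⟩ := Module.projective_lifting_property g.rangeRestrict
    (f.codRestrict _ fun x => hfg ⟨x, rfl⟩) g.surjective_rangeRestrict
  exact ⟨h, LinearMap.ext fun x => congrArg Subtype.val (LinearMap.congr_fun hh x)⟩

theorem exists_sum_comp_eq_id_of_ker_eq_smul_top {P X : Type*} [AddCommGroup P] [Module A P]
    [Module.Finite A P] [Module.Projective A P] [AddCommGroup X] [Module A X]
    (I : Ideal A) [I.IsTwoSided] {ε : P →ₗ[A] X} (hε : Function.Surjective ε)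
    (hker : LinearMap.ker ε = I • ⊤) :
    ∃ (k : ℕ) (a : Fin k → X →ₗ[A] A ⧸ I) (b : Fin k → (A ⧸ I) →ₗ[A] X),
      ∑ i, b i ∘ₗ a i = LinearMap.id := by
  obtain ⟨k, f, g, -, -, hfg⟩ := Module.Finite.exists_comp_eq_id_of_projective A P
  have ha (i : Fin k) : LinearMap.ker ε ≤ LinearMap.ker (I.mkQ ∘ₗ LinearMap.proj i ∘ₗ g) := by
    rw [hker]
    refine Submodule.smul_le.2 fun r hr x _ => ?_
    change I.mkQ (g (r • x) i) = 0
    rw [map_smul, Submodule.mkQ_apply, Submodule.Quotient.mk_eq_zero]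
    exact I.mul_mem_right _ hr
  have hb (i : Fin k) :
      I ≤ LinearMap.ker (LinearMap.toSpanSingleton A X (ε (f (Pi.single i 1)))) := fun r hr => by
    have : r • f (Pi.single i 1) ∈ LinearMap.ker ε :=
      hker ▸ Submodule.smul_mem_smul hr Submodule.mem_top
    simpa using this
  let e := ε.quotKerEquivOfSurjective hε
  refine ⟨k, fun i => (LinearMap.ker ε).liftQ _ (ha i) ∘ₗ e.symm.toLinearMap,
    fun i => I.liftQ _ (hb i), LinearMap.ext fun x => ?_⟩
  obtain ⟨x, rfl⟩ := hε x
  have hx : e.symm (ε x) = Submodule.Quotient.mk x := by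
    rw [LinearEquiv.symm_apply_eq]; rfl
  calc (∑ i, I.liftQ _ (hb i) ∘ₗ (LinearMap.ker ε).liftQ _ (ha i) ∘ₗ e.symm.toLinearMap) (ε x)
    _ = ∑ i, g x i • ε (f (Pi.single i 1)) := by
      rw [LinearMap.sum_apply]
      refine Finset.sum_congr rfl fun i _ => ?_
      rw [LinearMap.comp_apply, LinearMap.comp_apply, LinearEquiv.coe_coe, hx]
      rfl
    _ = ε (f (∑ i, g x i • Pi.single i 1)) := by simp only [map_sum, map_smul]
    _ = ε x := by rw [← pi_eq_sum_univ', ← LinearMap.comp_apply f, hfg, LinearMap.id_apply]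

end Module

variable {F : Type} [Field F] {𝒜 : GradedAlg F}

instance : 𝒜.jideal.IsTwoSided :=
  inferInstanceAs (RingHom.ker (GradedRing.projZeroRingHom 𝒜.grading)).IsTwoSided

theorem mem_jideal_of_mem_grading {i : ℕ} {a : 𝒜.A} (ha : a ∈ 𝒜.grading i) (hi : i ≠ 0) :
    a ∈ 𝒜.jideal :=
  HomogeneousIdeal.mem_irrelevant_of_mem 𝒜.grading (Nat.pos_of_ne_zero hi) ha

theorem decompose_zero_eq_zero_of_mem_jideal {a : 𝒜.A} (ha : a ∈ 𝒜.jideal) :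
    (DirectSum.decompose 𝒜.grading a 0 : 𝒜.A) = 0 :=
  (HomogeneousIdeal.mem_irrelevant_iff 𝒜.grading a).1 ha

namespace GMod

variable (N : 𝒜.GMod) {K : 𝒜.GMod}

instance : DirectSum.Decomposition N.grading :=
  (DirectSum.isInternal_submodule_of_iSupIndep_of_iSup_eq_top
    N.indep N.sup_eq_top).chooseDecomposition

/-- The projection of a graded module onto its homogeneous component of degree `k`. -/
def proj (k : ℤ) : N.M →ₗ[F] N.M :=
  (N.grading k).subtype ∘ₗ DirectSum.component F ℤ (fun j => N.grading j) k ∘ₗ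
    (DirectSum.decomposeLinearEquiv N.grading).toLinearMap

theorem proj_mem (k : ℤ) (x : N.M) : N.proj k x ∈ N.grading k :=
  (DirectSum.decompose N.grading x k).2

variable {N}

theorem proj_of_mem {k : ℤ} {x : N.M} (hx : x ∈ N.grading k) : N.proj k x = x :=
  DirectSum.decompose_of_mem_same N.grading hx

theorem proj_of_mem_of_ne {j k : ℤ} {x : N.M} (hx : x ∈ N.grading j) (hjk : j ≠ k) :
    N.proj k x = 0 :=
  DirectSum.decompose_of_mem_ne N.grading hx hjk

@[elab_as_elim]
theorem homogeneous_induction {motive : N.M → Prop} (zero : motive 0)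
    (homogeneous : ∀ j, ∀ x ∈ N.grading j, motive x)
    (add : ∀ x y, motive x → motive y → motive (x + y)) (x : N.M) : motive x :=
  DirectSum.Decomposition.inductionOn N.grading zero (fun {j} y => homogeneous j y y.2) add x

open Classical in
theorem finite_setOf_proj_ne_zero (x : N.M) : {k | N.proj k x ≠ 0}.Finite :=
  (DirectSum.decompose N.grading x).support.finite_toSet.subset fun _ hk =>
    DFinsupp.mem_support_iff.2 fun h => hk (congrArg Subtype.val h)

theorem proj_smul_of_mem {i : ℕ} {a : 𝒜.A} (ha : a ∈ 𝒜.grading i) (k : ℤ) (x : N.M) :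
    N.proj k (a • x) = a • N.proj (k - i) x := by
  induction x using homogeneous_induction with
  | zero => simp
  | add x y hx hy => rw [smul_add, map_add, map_add, hx, hy, smul_add]
  | homogeneous j x hx =>
    by_cases hj : j = k - i
    · have hax : a • x ∈ N.grading k := by simpa [hj] using N.smul_mem ha hx
      rw [proj_of_mem hax, proj_of_mem (hj ▸ hx)]
    · rw [proj_of_mem_of_ne hx hj, proj_of_mem_of_ne (N.smul_mem ha hx) (by omega), smul_zero]

open Classical in
theorem proj_smul (a : 𝒜.A) (k : ℤ) (x : N.M) :
    N.proj k (a • x) = ∑ i ∈ (DirectSum.decompose 𝒜.grading a).support,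
      (DirectSum.decompose 𝒜.grading a i : 𝒜.A) • N.proj (k - i) x := by
  conv_lhs => rw [← DirectSum.sum_support_decompose 𝒜.grading a, Finset.sum_smul, map_sum]
  exact Finset.sum_congr rfl fun i _ => proj_smul_of_mem (SetLike.coe_mem _) k x

theorem forall_proj_mem_of_span_eq_top {S : Set N.M} (hS : Submodule.span 𝒜.A S = ⊤)
    (L : ℤ → AddSubgroup N.M)
    (smul_mem : ∀ (i : ℕ) (k : ℤ), ∀ a ∈ 𝒜.grading i, ∀ x ∈ L (k - i), a • x ∈ L k)
    (hL : ∀ x ∈ S, ∀ k, N.proj k x ∈ L k) (x : N.M) : ∀ k, N.proj k x ∈ L k := by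
  have hx : x ∈ Submodule.span 𝒜.A S := hS ▸ Submodule.mem_top
  induction hx using Submodule.span_induction with
  | mem x hx => exact hL x hx
  | zero => intro k; rw [map_zero]; exact zero_mem _
  | add x y _ _ hx hy => intro k; rw [map_add]; exact add_mem (hx k) (hy k)
  | smul a x _ hx =>
    intro k
    rw [proj_smul]
    exact sum_mem fun i _ => smul_mem i k _ (SetLike.coe_mem _) _ (hx _)

variable (N) in
/-- The submodule `J N` of a graded module `N`. -/
abbrev rad : Submodule 𝒜.A N.M := 𝒜.jideal • ⊤

theorem map_mem_rad (f : N.M →ₗ[𝒜.A] K.M) {x : N.M} (hx : x ∈ N.rad) : f x ∈ K.rad := by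
  have hfx := Submodule.mem_map_of_mem (f := f) hx
  rw [Submodule.map_smul''] at hfx
  exact Submodule.smul_mono le_rfl le_top hfx

theorem mem_span_grading_lt_of_mem_rad {k : ℤ} {x : N.M} (hk : x ∈ N.grading k)
    (hx : x ∈ N.rad) : x ∈ Submodule.span 𝒜.A (⋃ j < k, (N.grading j : Set N.M)) := by
  classical
  rw [← proj_of_mem hk]
  clear hk
  induction hx using Submodule.smul_induction_on' with
  | smul a ha x _ =>
    rw [proj_smul]
    refine sum_mem fun i hi => Submodule.smul_mem _ _ (Submodule.subset_span ?_)
    have hi0 : i ≠ 0 := by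
      rintro rfl
      exact DFinsupp.mem_support_iff.1 hi (Subtype.ext (decompose_zero_eq_zero_of_mem_jideal ha))
    exact Set.mem_biUnion (show k - i < k by omega) (N.proj_mem _ x)
  | add x _ y _ hx hy => rw [map_add]; exact add_mem hx hy

theorem GenInDeg.mem_rad {t : ℤ} (hN : N.GenInDeg t) {k : ℤ} (hkt : k ≠ t) {x : N.M}
    (hx : x ∈ N.grading k) : x ∈ N.rad := by
  have key := forall_proj_mem_of_span_eq_top hN
    (fun k => if k = t then ⊤ else N.rad.toAddSubgroup) (fun i k a ha y hy => ?_)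
    (fun y hy k => ?_) x k
  · rwa [if_neg hkt, proj_of_mem hx] at key
  · by_cases hk : k = t
    · simp [hk]
    by_cases hi : i = 0
    · subst hi
      simp only [Nat.cast_zero, sub_zero, if_neg hk] at hy ⊢
      exact N.rad.smul_mem a hy
    · rw [if_neg hk]
      exact Submodule.smul_mem_smul (mem_jideal_of_mem_grading ha hi) Submodule.mem_top
  · by_cases hk : k = t
    · simp [hk]
    · rw [proj_of_mem_of_ne hy (Ne.symm hk)]
      exact zero_mem _

theorem proj_eq_zero_of_lt_of_span_eq_top {S : Set N.M} (hS : Submodule.span 𝒜.A S = ⊤) {b : ℤ}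
    (hb : ∀ x ∈ S, ∀ k < b, N.proj k x = 0) {k : ℤ} (hk : k < b) (x : N.M) : N.proj k x = 0 := by
  have key := forall_proj_mem_of_span_eq_top hS (fun k => if k < b then ⊥ else ⊤)
    (fun i j a _ y hy => ?_) (fun y hy j => ?_) x k
  · simpa [hk] using key
  · by_cases hj : j < b
    · simp only [if_pos hj, if_pos (show j - i < b by omega), AddSubgroup.mem_bot] at hy ⊢
      rw [hy, smul_zero]
    · simp [hj]
  · by_cases hj : j < b
    · simp [hj, hb y hy j hj]
    · simp [hj]

theorem GenInDeg.eq_zero_of_mem_rad {t : ℤ} (hN : N.GenInDeg t) {x : N.M}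
    (hx : x ∈ N.grading t) (hxr : x ∈ N.rad) : x = 0 := by
  have hlow : (⋃ j < t, (N.grading j : Set N.M)) ⊆ {0} := by
    refine Set.iUnion₂_subset fun j hj y hy => ?_
    rw [← proj_of_mem hy]
    exact proj_eq_zero_of_lt_of_span_eq_top hN
      (fun z hz k hk => proj_of_mem_of_ne hz hk.ne') hj y
  simpa using Submodule.span_mono hlow (mem_span_grading_lt_of_mem_rad hx hxr)

theorem exists_forall_lt_grading_eq_bot [Module.Finite 𝒜.A N.M] :
    ∃ b, ∀ k < b, N.grading k = ⊥ := by
  obtain ⟨S, hS⟩ := Module.Finite.fg_top (R := 𝒜.A) (M := N.M)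
  obtain ⟨b, hb⟩ := (S.finite_toSet.biUnion fun x _ => finite_setOf_proj_ne_zero x).bddBelow
  refine ⟨b, fun k hk => (Submodule.eq_bot_iff _).2 fun x hx => ?_⟩
  rw [← proj_of_mem hx]
  refine proj_eq_zero_of_lt_of_span_eq_top hS (fun y hy j hj => ?_) hk x
  by_contra hne
  exact hj.not_ge (hb (Set.mem_biUnion hy hne))

theorem genInDeg_of_forall_ne_mem_rad [Module.Finite 𝒜.A N.M] {t : ℤ}
    (h : ∀ k ≠ t, ∀ x ∈ N.grading k, x ∈ N.rad) : N.GenInDeg t := by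
  obtain ⟨b, hb⟩ := exists_forall_lt_grading_eq_bot (N := N)
  have key (m : ℕ) :
      ∀ k < b + m, ∀ x ∈ N.grading k, x ∈ Submodule.span 𝒜.A (N.grading t : Set N.M) := by
    induction m with
    | zero =>
      intro k hk x hx
      rw [hb k (by simpa using hk), Submodule.mem_bot] at hx
      exact hx ▸ zero_mem _
    | succ m ih =>
      intro k hk x hx
      by_cases hkt : k = t
      · exact Submodule.subset_span (hkt ▸ hx)
      · refine Submodule.span_le.2 (Set.iUnion₂_subset fun j hj => ?_)
          (mem_span_grading_lt_of_mem_rad hx (h k hkt x hx))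
        exact ih j (by push_cast at hk; omega)
  refine Submodule.eq_top_iff'.2 fun x => ?_
  induction x using homogeneous_induction with
  | zero => exact zero_mem _
  | add x y hx hy => exact add_mem hx hy
  | homogeneous k x hx => exact key (k - b + 1).toNat k (by omega) x hx

theorem linearMap_ext {X : Type*} [AddCommGroup X] [Module 𝒜.A X] {f g : N.M →ₗ[𝒜.A] X}
    (h : ∀ j, ∀ x ∈ N.grading j, f x = g x) : f = g := by
  ext x
  induction x using homogeneous_induction with
  | zero => simp
  | add x y hx hy => rw [map_add, map_add, hx, hy]
  | homogeneous j x hx => exact h j x hx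

/-- The `A`-linear map `f` raises degrees by `c`. -/
def IsHomogeneousMap (c : ℤ) (f : N.M →ₗ[𝒜.A] K.M) : Prop :=
  ∀ j, ∀ x ∈ N.grading j, f x ∈ K.grading (j + c)

theorem IsHomogeneousMap.apply_mem_grading {f : N.M →ₗ[𝒜.A] K.M} (hf : IsHomogeneousMap 0 f)
    {j : ℤ} {x : N.M} (hx : x ∈ N.grading j) : f x ∈ K.grading j := by
  simpa using hf j x hx

open DirectSum in
/-- The homogeneous component of degree `c` of an `A`-linear map `f` between graded modules: on
elements of degree `j` it is `f` followed by the projection onto degree `j + c`. -/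
def degreePart (c : ℤ) (f : N.M →ₗ[𝒜.A] K.M) : N.M →ₗ[𝒜.A] K.M :=
  let g : N.M →ₗ[F] K.M :=
    toModule F ℤ K.M (fun j => K.proj (j + c) ∘ₗ f.restrictScalars F ∘ₗ (N.grading j).subtype) ∘ₗ
      (decomposeLinearEquiv N.grading).toLinearMap
  have hg {j : ℤ} {x : N.M} (hx : x ∈ N.grading j) : g x = K.proj (j + c) (f x) := by
    lift x to N.grading j using hx
    simp [g]
  { g with
    map_smul' := fun a x => by
      change g (a • x) = a • g x
      induction x using homogeneous_induction with
      | zero => simp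
      | add x y hx hy => rw [smul_add, map_add, map_add, hx, hy, smul_add]
      | homogeneous j x hx =>
        induction a using Decomposition.inductionOn 𝒜.grading with
        | zero => simp
        | add a b ha hb => rw [add_smul, map_add, ha, hb, add_smul]
        | @homogeneous i a =>
          rw [hg hx, hg (N.smul_mem a.2 hx), map_smul, proj_smul_of_mem a.2]
          congr 3
          ring }

theorem degreePart_of_mem (c : ℤ) (f : N.M →ₗ[𝒜.A] K.M) {j : ℤ} {x : N.M}
    (hx : x ∈ N.grading j) : degreePart c f x = K.proj (j + c) (f x) := by
  lift x to N.grading j using hx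
  simp [degreePart]

theorem isHomogeneousMap_degreePart (c : ℤ) (f : N.M →ₗ[𝒜.A] K.M) :
    IsHomogeneousMap c (degreePart c f) := fun j x hx => by
  rw [degreePart_of_mem c f hx]
  exact K.proj_mem _ _

theorem IsHomogeneousMap.degreePart_eq {c : ℤ} {f : N.M →ₗ[𝒜.A] K.M}
    (hf : IsHomogeneousMap c f) : degreePart c f = f :=
  linearMap_ext fun j x hx => by rw [degreePart_of_mem c f hx, proj_of_mem (hf j x hx)]

end GMod

namespace GHom

open GMod

variable {N K L : 𝒜.GMod}

theorem proj_lin (g : GHom N K) (k : ℤ) (x : N.M) : K.proj k (g.lin x) = g.lin (N.proj k x) := by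
  induction x using homogeneous_induction with
  | zero => simp
  | add x y hx hy => simp only [map_add, hx, hy]
  | homogeneous j x hx =>
    by_cases hj : j = k
    · subst hj
      rw [proj_of_mem hx, proj_of_mem (g.grad j x hx)]
    · rw [proj_of_mem_of_ne hx hj, proj_of_mem_of_ne (g.grad j x hx) hj, map_zero]

theorem degreePart_comp (g : GHom N K) (c : ℤ) (f : K.M →ₗ[𝒜.A] L.M) :
    degreePart c (f ∘ₗ g.lin) = degreePart c f ∘ₗ g.lin :=
  linearMap_ext fun j x hx => by
    rw [LinearMap.comp_apply, degreePart_of_mem c _ hx, degreePart_of_mem c _ (g.grad j x hx),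
      LinearMap.comp_apply]

theorem comp_degreePart (g : GHom K L) (c : ℤ) (f : N.M →ₗ[𝒜.A] K.M) :
    degreePart c (g.lin ∘ₗ f) = g.lin ∘ₗ degreePart c f :=
  linearMap_ext fun j x hx => by
    rw [LinearMap.comp_apply, degreePart_of_mem c _ hx, degreePart_of_mem c _ hx,
      LinearMap.comp_apply, proj_lin]

end GHom

variable {X Y : Type} [AddCommGroup X] [Module 𝒜.A X] [AddCommGroup Y] [Module 𝒜.A Y]

variable (𝒜) in
/-- A resolution of an `A`-module `X` by projective graded modules with differentials of degree
zero. Neither `X` nor the augmentation is graded, so that ungraded comparison maps apply; nor is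
the resolution required to be minimal. -/
structure Resolution (X : Type) [AddCommGroup X] [Module 𝒜.A X] where
  P : ℕ → 𝒜.GMod
  d : ∀ n : ℕ, GHom (P (n + 1)) (P n)
  aug : (P 0).M →ₗ[𝒜.A] X
  projective : ∀ n, Module.Projective 𝒜.A (P n).M
  aug_surj : Function.Surjective aug
  exact_aug : LinearMap.range (d 0).lin = LinearMap.ker aug
  exact : ∀ n, LinearMap.range (d (n + 1)).lin = LinearMap.ker (d n).lin

namespace Resolution

attribute [instance] Resolution.projective

variable (C : Resolution 𝒜 X) (D : Resolution 𝒜 Y)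

theorem aug_comp_d : C.aug ∘ₗ (C.d 0).lin = 0 :=
  LinearMap.range_le_ker_iff.1 C.exact_aug.le

theorem d_comp_d (n : ℕ) : (C.d n).lin ∘ₗ (C.d (n + 1)).lin = 0 :=
  LinearMap.range_le_ker_iff.1 (C.exact n).le

theorem aug_d_apply (x : (C.P 1).M) : C.aug ((C.d 0).lin x) = 0 :=
  LinearMap.congr_fun C.aug_comp_d x

theorem d_d_apply (n : ℕ) (x : (C.P (n + 2)).M) : (C.d n).lin ((C.d (n + 1)).lin x) = 0 :=
  LinearMap.congr_fun (C.d_comp_d n) x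

/-- A chain map `C → D` lifting the map `φ` of the resolved modules. -/
structure Lift (φ : X →ₗ[𝒜.A] Y) where
  map : ∀ n, (C.P n).M →ₗ[𝒜.A] (D.P n).M
  aug_comp_map : D.aug ∘ₗ map 0 = φ ∘ₗ C.aug
  d_comp_map : ∀ n, (D.d n).lin ∘ₗ map (n + 1) = map n ∘ₗ (C.d n).lin

theorem nonempty_lift (φ : X →ₗ[𝒜.A] Y) : Nonempty (Lift C D φ) := by
  let S (n : ℕ) := {g : (C.P n).M →ₗ[𝒜.A] (D.P n).M //
    LinearMap.range (g ∘ₗ (C.d n).lin) ≤ LinearMap.range (D.d n).lin}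
  have succ (n : ℕ) (g : S n) : ∃ h : S (n + 1), (D.d n).lin ∘ₗ h.1 = g.1 ∘ₗ (C.d n).lin := by
    obtain ⟨h, hh⟩ := exists_comp_eq_of_range_le g.2
    refine ⟨⟨h, ?_⟩, hh⟩
    rw [D.exact, LinearMap.range_le_ker_iff, ← LinearMap.comp_assoc, hh, LinearMap.comp_assoc,
      C.d_comp_d, LinearMap.comp_zero]
  obtain ⟨g₀, hg₀⟩ := Module.projective_lifting_property D.aug (φ ∘ₗ C.aug) D.aug_surj
  have hg₀' : LinearMap.range (g₀ ∘ₗ (C.d 0).lin) ≤ LinearMap.range (D.d 0).lin := by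
    rw [D.exact_aug, LinearMap.range_le_ker_iff, ← LinearMap.comp_assoc, hg₀,
      LinearMap.comp_assoc, C.aug_comp_d, LinearMap.comp_zero]
  choose next hnext using succ
  let g (n : ℕ) : S n := n.rec ⟨g₀, hg₀'⟩ next
  exact ⟨⟨fun n => (g n).1, hg₀, fun n => hnext n (g n)⟩⟩

variable {C D}

theorem Lift.aug_map_apply {φ : X →ₗ[𝒜.A] Y} (f : Lift C D φ) (x : (C.P 0).M) :
    D.aug (f.map 0 x) = φ (C.aug x) :=
  LinearMap.congr_fun f.aug_comp_map x

theorem Lift.d_map_apply {φ : X →ₗ[𝒜.A] Y} (f : Lift C D φ) (n : ℕ) (x : (C.P (n + 1)).M) :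
    (D.d n).lin (f.map (n + 1) x) = f.map n ((C.d n).lin x) :=
  LinearMap.congr_fun (f.d_comp_map n) x

theorem Lift.exists_homotopy (f : Lift C D 0) (n : ℕ) :
    ∃ σ : (C.P n).M →ₗ[𝒜.A] (D.P (n + 1)).M,
      (D.d n).lin ∘ₗ σ ∘ₗ (C.d n).lin = f.map n ∘ₗ (C.d n).lin := by
  induction n with
  | zero =>
    have hf : LinearMap.range (f.map 0) ≤ LinearMap.range (D.d 0).lin := by
      rw [D.exact_aug, LinearMap.range_le_ker_iff, f.aug_comp_map, LinearMap.zero_comp]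
    obtain ⟨σ, hσ⟩ := exists_comp_eq_of_range_le hf
    exact ⟨σ, by rw [← LinearMap.comp_assoc, hσ]⟩
  | succ n ih =>
    obtain ⟨σ, hσ⟩ := ih
    have hf : LinearMap.range (f.map (n + 1) - σ ∘ₗ (C.d n).lin) ≤
        LinearMap.range (D.d (n + 1)).lin := by
      rw [D.exact, LinearMap.range_le_ker_iff, LinearMap.comp_sub, hσ, f.d_comp_map, sub_self]
    obtain ⟨τ, hτ⟩ := exists_comp_eq_of_range_le hf
    refine ⟨τ, ?_⟩
    rw [← LinearMap.comp_assoc, hτ, LinearMap.sub_comp, LinearMap.comp_assoc, C.d_comp_d,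
      LinearMap.comp_zero, sub_zero]

theorem Lift.map_mem_rad_sup_range (f : Lift C D 0) {n : ℕ} {x : (C.P (n + 1)).M}
    (hx : (C.d n).lin x ∈ (C.P n).rad) :
    f.map (n + 1) x ∈ (D.P (n + 1)).rad ⊔ LinearMap.range (D.d (n + 1)).lin := by
  obtain ⟨σ, hσ⟩ := f.exists_homotopy n
  rw [← add_sub_cancel (σ ((C.d n).lin x)) (f.map (n + 1) x)]
  refine Submodule.add_mem_sup (GMod.map_mem_rad σ hx) ?_
  rw [D.exact, LinearMap.mem_ker, map_sub, sub_eq_zero, f.d_map_apply]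
  exact (LinearMap.congr_fun hσ x).symm

end Resolution

namespace MinRes

variable {M : 𝒜.GMod} (R : MinRes M)

/-- The resolution underlying a minimal graded resolution. -/
def toResolution : Resolution 𝒜 M.M where
  P := R.P
  d := R.d
  aug := R.aug.lin
  projective := R.projective
  aug_surj := R.aug_surj
  exact_aug := R.exact_aug
  exact := R.exact

variable {R}

theorem exists_isHomogeneousMap_lift (C : Resolution 𝒜 X) (R : MinRes M) {c : ℤ} {φ : X →ₗ[𝒜.A] M.M}
    (hφ : GMod.IsHomogeneousMap c (φ ∘ₗ C.aug)) :
    ∃ f : C.Lift R.toResolution φ, ∀ n, GMod.IsHomogeneousMap c (f.map n) := by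
  obtain ⟨f⟩ := C.nonempty_lift R.toResolution φ
  refine ⟨⟨fun n => GMod.degreePart c (f.map n), ?_, fun n => ?_⟩,
    fun n => GMod.isHomogeneousMap_degreePart c _⟩
  · rw [← hφ.degreePart_eq, ← f.aug_comp_map]
    exact (R.aug.comp_degreePart c _).symm
  · rw [← GHom.comp_degreePart, f.d_comp_map, GHom.degreePart_comp]

theorem mem_rad_of_d_eq_zero {n : ℕ} {x : (R.P (n + 1)).M} (hx : (R.d n).lin x = 0) :
    x ∈ (R.P (n + 1)).rad :=
  R.minimal (n + 1) (R.exact n ▸ LinearMap.mem_ker.2 hx)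

theorem aug_mem_rad_iff {x : (R.P 0).M} : R.aug.lin x ∈ M.rad ↔ x ∈ (R.P 0).rad := by
  refine ⟨fun hx => ?_, GMod.map_mem_rad R.aug.lin⟩
  have hmap : M.rad = (R.P 0).rad.map R.aug.lin := by
    rw [Submodule.map_smul'', Submodule.map_top, LinearMap.range_eq_top.2 R.aug_surj]
  obtain ⟨z, hz, hzx⟩ := hmap ▸ hx
  rw [← sub_add_cancel x z]
  refine add_mem (R.minimal 0 ?_) hz
  rw [R.exact_aug, LinearMap.mem_ker, map_sub, hzx, sub_self]

end MinRes

/-- The direct product of two graded modules. -/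
def GMod.prod (N K : 𝒜.GMod) : 𝒜.GMod where
  M := N.M × K.M
  grading j := (N.grading j).prod (K.grading j)
  sup_eq_top := by
    simp only [LinearMap.prod_eq_sup_map, iSup_sup_eq, ← Submodule.map_iSup, N.sup_eq_top,
      K.sup_eq_top, Submodule.map_top, LinearMap.sup_range_inl_inr]
  indep i := by
    have hle : ⨆ j ≠ i, (N.grading j).prod (K.grading j) ≤
        (⨆ j ≠ i, N.grading j).prod (⨆ j ≠ i, K.grading j) :=
      iSup₂_le fun j hj => Submodule.prod_mono (le_iSup₂_of_le j hj le_rfl)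
        (le_iSup₂_of_le j hj le_rfl)
    exact Submodule.disjoint_def.2 fun x hx hx' =>
      Prod.ext (Submodule.disjoint_def.1 (N.indep i) _ hx.1 (hle hx').1)
        (Submodule.disjoint_def.1 (K.indep i) _ hx.2 (hle hx').2)
  smul_mem ha hm := ⟨N.smul_mem ha hm.1, K.smul_mem ha hm.2⟩

theorem GMod.mk_mem_rad_prod {N K : 𝒜.GMod} {x : N.M} {y : K.M} (hx : x ∈ N.rad)
    (hy : y ∈ K.rad) : (x, y) ∈ (N.prod K).rad := by
  have hx' : (x, (0 : K.M)) ∈ (N.prod K).rad :=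
    map_mem_rad (K := N.prod K) (LinearMap.inl 𝒜.A N.M K.M) hx
  have hy' : ((0 : N.M), y) ∈ (N.prod K).rad :=
    map_mem_rad (K := N.prod K) (LinearMap.inr 𝒜.A N.M K.M) hy
  have hxy : (x, y) = (x, (0 : K.M)) + ((0 : N.M), y) := by simp
  exact hxy ▸ add_mem hx' hy'

namespace Resolution

variable {C : Resolution 𝒜 X} {D : Resolution 𝒜 Y} {φ : X →ₗ[𝒜.A] Y}

variable (C D) in
/-- The terms `D_0`, `D_{n+1} × C_n` of the mapping cone of a chain map `C → D`. -/
def coneP : ℕ → 𝒜.GMod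
  | 0 => D.P 0
  | n + 1 => (D.P (n + 1)).prod (C.P n)

namespace Lift

variable (f : Lift C D φ) (hf : ∀ n, GMod.IsHomogeneousMap 0 (f.map n))

/-- The differentials `(x, y) ↦ d x + f y` and `(x, y) ↦ (d x + f y, -d y)` of the mapping cone of
a degree-preserving chain map `f`. -/
def coneD : ∀ n, GHom (coneP C D (n + 1)) (coneP C D n)
  | 0 =>
    { lin := (D.d 0).lin.coprod (f.map 0)
      grad := fun j _ hx => add_mem ((D.d 0).grad j _ hx.1) ((hf 0).apply_mem_grading hx.2) }
  | n + 1 =>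
    { lin := ((D.d (n + 1)).lin.coprod (f.map (n + 1))).prod (-(C.d n).lin ∘ₗ LinearMap.snd _ _ _)
      grad := fun j _ hx => ⟨add_mem ((D.d (n + 1)).grad j _ hx.1)
        ((hf (n + 1)).apply_mem_grading hx.2), neg_mem ((C.d n).grad j _ hx.2)⟩ }

theorem coneD_zero_apply (x : (D.P 1).M) (y : (C.P 0).M) :
    (f.coneD hf 0).lin (x, y) = (D.d 0).lin x + f.map 0 y := rfl

theorem coneD_succ_apply (n : ℕ) (x : (D.P (n + 2)).M) (y : (C.P (n + 1)).M) :
    (f.coneD hf (n + 1)).lin (x, y) =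
      ((D.d (n + 1)).lin x + f.map (n + 1) y, -(C.d n).lin y) := rfl

theorem mem_range_coneD_succ {n : ℕ} {x : (D.P (n + 1)).M} {y : (C.P n).M}
    (hxy : (D.d n).lin x + f.map n y = 0) (hy : y ∈ LinearMap.range (C.d n).lin) :
    (x, y) ∈ LinearMap.range (f.coneD hf (n + 1)).lin := by
  obtain ⟨y, rfl⟩ := hy
  have hx : x + f.map (n + 1) y ∈ LinearMap.range (D.d (n + 1)).lin := by
    rwa [D.exact, LinearMap.mem_ker, map_add, f.d_map_apply]
  obtain ⟨z, hz⟩ := hx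
  exact ⟨(z, -y), by rw [coneD_succ_apply, hz, map_neg, map_neg, neg_neg, add_neg_cancel_right]⟩

theorem range_coneD_zero :
    LinearMap.range (f.coneD hf 0).lin =
      LinearMap.ker ((LinearMap.range φ).mkQ ∘ₗ D.aug) := by
  refine Submodule.ext fun z : (D.P 0).M => Iff.trans ?_
    (Submodule.Quotient.mk_eq_zero (LinearMap.range φ) (x := D.aug z)).symm
  constructor
  · rintro ⟨⟨x, y⟩, rfl⟩
    rw [coneD_zero_apply, map_add, aug_d_apply, zero_add, f.aug_map_apply]
    exact ⟨_, rfl⟩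
  · rintro ⟨w, hw⟩
    obtain ⟨y, rfl⟩ := C.aug_surj w
    have hz : z - f.map 0 y ∈ LinearMap.range (D.d 0).lin := by
      rw [D.exact_aug, LinearMap.mem_ker, map_sub, ← hw, f.aug_map_apply, sub_self]
    obtain ⟨x, hx⟩ := hz
    exact ⟨(x, y), by rw [coneD_zero_apply, hx, sub_add_cancel]⟩

theorem coneD_comp_coneD (n : ℕ) :
    (f.coneD hf n).lin ∘ₗ (f.coneD hf (n + 1)).lin = 0 := by
  have hfd (n : ℕ) (x : (D.P (n + 2)).M) (y : (C.P (n + 1)).M) :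
      (D.d n).lin ((D.d (n + 1)).lin x + f.map (n + 1) y) + f.map n (-(C.d n).lin y) = 0 := by
    rw [map_add, D.d_d_apply, f.d_map_apply, zero_add, map_neg, add_neg_cancel]
  refine LinearMap.ext fun ⟨x, y⟩ => ?_
  cases n with
  | zero =>
    exact hfd 0 x y
  | succ n =>
    refine Prod.ext (hfd (n + 1) x y) ?_
    change -(C.d n).lin (-(C.d (n + 1)).lin y) = 0
    rw [map_neg, neg_neg, d_d_apply]

theorem range_coneD_succ (hφ : Function.Injective φ) (n : ℕ) :
    LinearMap.range (f.coneD hf (n + 1)).lin = LinearMap.ker (f.coneD hf n).lin := by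
  refine le_antisymm (LinearMap.range_le_ker_iff.2 (f.coneD_comp_coneD hf n)) ?_
  rintro ⟨x, y⟩ hxy
  cases n with
  | zero =>
    have hfy : f.map 0 y = -(D.d 0).lin x := eq_neg_of_add_eq_zero_right hxy
    refine f.mem_range_coneD_succ hf hxy ?_
    rw [C.exact_aug, LinearMap.mem_ker, ← hφ.eq_iff, map_zero, ← f.aug_map_apply, hfy,
      map_neg, aug_d_apply, neg_zero]
  | succ n =>
    obtain ⟨hx, hy⟩ := Prod.ext_iff.1 hxy
    exact f.mem_range_coneD_succ hf hx (C.exact n ▸ neg_eq_zero.1 hy)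

/-- The mapping cone of a degree-preserving lift of an injective map `φ`, as a resolution of the
cokernel of `φ`. -/
def cone (hφ : Function.Injective φ) : Resolution 𝒜 (Y ⧸ LinearMap.range φ) where
  P := coneP C D
  d := f.coneD hf
  aug := (LinearMap.range φ).mkQ ∘ₗ D.aug
  projective
    | 0 => D.projective 0
    | n + 1 => inferInstanceAs (Module.Projective 𝒜.A ((D.P (n + 1)).M × (C.P n).M))
  aug_surj := (Submodule.mkQ_surjective _).comp D.aug_surj
  exact_aug := f.range_coneD_zero hf
  exact := f.range_coneD_succ hf hφ

end Lift

end Resolution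

namespace IsTrivialGMod

variable {T : 𝒜.GMod} (hT : IsTrivialGMod T)

include hT

theorem grading_zero : T.grading 0 = ⊤ := by
  rw [eq_top_iff, ← T.sup_eq_top]
  refine iSup_le fun j => ?_
  by_cases hj : j = 0
  · rw [hj]
  · rw [hT.1 j hj]
    exact bot_le

theorem exists_sum_comp_eq_id {P : Type} [AddCommGroup P] [Module 𝒜.A P] [Module.Finite 𝒜.A P]
    [Module.Projective 𝒜.A P] {ε : P →ₗ[𝒜.A] X} (hε : Function.Surjective ε)
    (hker : LinearMap.ker ε = 𝒜.jideal • ⊤) :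
    ∃ (k : ℕ) (a : Fin k → X →ₗ[𝒜.A] T.M) (b : Fin k → T.M →ₗ[𝒜.A] X),
      ∑ i, b i ∘ₗ a i = LinearMap.id := by
  obtain ⟨e⟩ := hT.2
  obtain ⟨k, a, b, hab⟩ := exists_sum_comp_eq_id_of_ker_eq_smul_top 𝒜.jideal hε hker
  refine ⟨k, fun i => e.symm.toLinearMap ∘ₗ a i, fun i => b i ∘ₗ e.toLinearMap, ?_⟩
  simpa only [LinearMap.ext_iff, LinearMap.sum_apply, LinearMap.comp_apply, LinearEquiv.coe_coe,
    LinearEquiv.apply_symm_apply] using hab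

end IsTrivialGMod

namespace Resolution

/-- If `∑ b i ∘ a i = id` on the module resolved by `C`, the difference between the identity of `C`
and the sum of the composites of lifts of `a i` and `b i` is a lift of zero. -/
def Lift.idSubSumComp {C : Resolution 𝒜 X} {D : Resolution 𝒜 Y} {ι : Type*} [Fintype ι]
    {a : ι → X →ₗ[𝒜.A] Y} {b : ι → Y →ₗ[𝒜.A] X} (hab : ∑ i, b i ∘ₗ a i = LinearMap.id)
    (f : ∀ i, Lift C D (a i)) (g : ∀ i, Lift D C (b i)) : Lift C C 0 where
  map n := LinearMap.id - ∑ i, (g i).map n ∘ₗ (f i).map n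
  aug_comp_map := LinearMap.ext fun x => by
    have hx : ∑ i, b i (a i (C.aug x)) = C.aug x := by
      simpa only [LinearMap.sum_apply, LinearMap.comp_apply, LinearMap.id_apply] using
        LinearMap.congr_fun hab (C.aug x)
    simp only [LinearMap.comp_apply, LinearMap.sub_apply, LinearMap.id_apply, LinearMap.sum_apply,
      map_sub, map_sum, aug_map_apply, hx, sub_self, LinearMap.zero_apply]
  d_comp_map n := LinearMap.ext fun x => by
    simp only [LinearMap.comp_apply, LinearMap.sub_apply, LinearMap.id_apply, LinearMap.sum_apply,
      map_sub, map_sum, d_map_apply]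

theorem mem_rad_sup_range_of_ne {C : Resolution 𝒜 X} [Module.Finite 𝒜.A (C.P 0).M] {s : ℤ}
    (hC : (C.P 0).GenInDeg s) (hker : LinearMap.ker C.aug = (C.P 0).rad)
    {T : 𝒜.GMod} (hT : IsTrivialGMod T) (RT : MinRes T) {n : ℕ} {t : ℤ}
    (hRT : (RT.P (n + 1)).GenInDeg t) {j : ℤ} (hj : j ≠ t + s) {x : (C.P (n + 1)).M}
    (hx : x ∈ (C.P (n + 1)).grading j) (hdx : (C.d n).lin x ∈ (C.P n).rad) :
    x ∈ (C.P (n + 1)).rad ⊔ LinearMap.range (C.d (n + 1)).lin := by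
  obtain ⟨k, a, b, hab⟩ := hT.exists_sum_comp_eq_id C.aug_surj hker
  have ha (i : Fin k) : GMod.IsHomogeneousMap (-s) (a i ∘ₗ C.aug) := by
    intro j y hy
    by_cases hjs : j = s
    · rw [hjs, add_neg_cancel, hT.grading_zero]
      exact Submodule.mem_top
    · have hy0 : C.aug y = 0 := LinearMap.mem_ker.1 (hker ▸ hC.mem_rad hjs hy)
      rw [LinearMap.comp_apply, hy0, map_zero]
      exact zero_mem _
  choose f hf using fun i => MinRes.exists_isHomogeneousMap_lift C RT (ha i)
  have g (i : Fin k) : Lift RT.toResolution C (b i) := (nonempty_lift _ C (b i)).some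
  have hgf : ∑ i, (g i).map (n + 1) ((f i).map (n + 1) x) ∈ (C.P (n + 1)).rad :=
    sum_mem fun i _ => GMod.map_mem_rad _ (hRT.mem_rad (by omega) (hf i (n + 1) j x hx))
  have hsub := (Lift.idSubSumComp hab f g).map_mem_rad_sup_range hdx
  have key := add_mem hsub (Submodule.mem_sup_left hgf)
  simpa [Lift.idSubSumComp] using key

end Resolution

theorem IsJM.exists_linearMap {M JM : 𝒜.GMod} (h : IsJM M JM) :
    ∃ ι : JM.M →ₗ[𝒜.A] M.M, Function.Injective ι ∧ LinearMap.range ι = M.rad ∧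
      GMod.IsHomogeneousMap 0 ι := by
  obtain ⟨e, he⟩ := h
  refine ⟨M.rad.subtype ∘ₗ e.toLinearMap, M.rad.subtype_injective.comp e.injective, ?_,
    fun j x hx => ?_⟩
  · rw [LinearEquiv.range_comp, Submodule.range_subtype]
  · rw [add_zero]
    exact (he j x).1 hx

namespace Resolution.Lift

variable {C : Resolution 𝒜 X} {D : Resolution 𝒜 Y} {φ : X →ₗ[𝒜.A] Y} (f : Lift C D φ)
  (hf : ∀ n, GMod.IsHomogeneousMap 0 (f.map n))
  (hC : ∀ n, LinearMap.range (C.d n).lin ≤ (C.P n).rad)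

include hC

theorem coneD_inr_mem_rad {n : ℕ} {y : (C.P n).M} (hy : f.map n y ∈ (D.P n).rad) :
    (f.coneD hf n).lin ((0 : (D.P (n + 1)).M), y) ∈ (coneP C D n).rad := by
  cases n with
  | zero => rwa [coneD_zero_apply, map_zero, zero_add]
  | succ n =>
    rw [coneD_succ_apply, map_zero, zero_add]
    exact GMod.mk_mem_rad_prod hy (neg_mem (hC n ⟨y, rfl⟩))

include hf in
theorem mem_rad_of_map_mem_rad [Module.Finite 𝒜.A (D.P 0).M] (hφ : Function.Injective φ)
    (hker : (LinearMap.range φ).comap D.aug = (D.P 0).rad) {s : ℤ} (hD : (D.P 0).GenInDeg s)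
    {T : 𝒜.GMod} (hT : IsTrivialGMod T) (RT : MinRes T) {n : ℕ} {t : ℤ}
    (hRT : (RT.P (n + 1)).GenInDeg t) {j : ℤ} (hj : j ≠ t + s) {y : (C.P n).M}
    (hy : y ∈ (C.P n).grading j) (hfy : f.map n y ∈ (D.P n).rad) : y ∈ (C.P n).rad := by
  let E := f.cone hf hφ
  have : Module.Finite 𝒜.A (E.P 0).M := ‹Module.Finite 𝒜.A (D.P 0).M›
  have hkerE : LinearMap.ker E.aug = (E.P 0).rad := by
    change LinearMap.ker ((LinearMap.range φ).mkQ ∘ₗ D.aug) = (D.P 0).rad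
    rw [LinearMap.ker_comp, Submodule.ker_mkQ, hker]
  let w : (E.P (n + 1)).M := ((0 : (D.P (n + 1)).M), y)
  have hE : w ∈ (E.P (n + 1)).rad ⊔ LinearMap.range (E.d (n + 1)).lin :=
    mem_rad_sup_range_of_ne (C := E) hD hkerE hT RT hRT hj ⟨zero_mem _, hy⟩
      (f.coneD_inr_mem_rad hf hC hfy)
  obtain ⟨z, hz, _, ⟨⟨u, v⟩, rfl⟩, hzy⟩ := Submodule.mem_sup.1 hE
  have hz' : z.2 ∈ (C.P n).rad :=
    GMod.map_mem_rad (N := (D.P (n + 1)).prod (C.P n)) (K := C.P n)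
      (LinearMap.snd 𝒜.A (D.P (n + 1)).M (C.P n).M) hz
  have hzv : z.2 + -(C.d n).lin v = y := congrArg Prod.snd hzy
  rw [← hzv]
  exact add_mem hz' (neg_mem (hC n ⟨v, rfl⟩))

end Resolution.Lift

namespace MinRes

theorem genInDeg_of_isJM {δ : ℕ → ℤ} (hδ : δ 0 = 0) {s : ℤ} {T : 𝒜.GMod} (hT : IsTrivialGMod T)
    {RT : MinRes T} (hRT : ∀ n, (RT.P n).GenInDeg (δ n)) {M JM : 𝒜.GMod} {RM : MinRes M}
    (hRM : ∀ n, (RM.P n).GenInDeg (δ n + s)) (hJM : IsJM M JM) (R : MinRes JM) (n : ℕ) :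
    (R.P n).GenInDeg (δ (n + 1) + s) := by
  obtain ⟨ι, hinj, hι, hιdeg⟩ := hJM.exists_linearMap
  have haug : GMod.IsHomogeneousMap 0 (ι ∘ₗ R.aug.lin) := fun j x hx =>
    hιdeg j _ (R.aug.grad j x hx)
  obtain ⟨f, hf⟩ := exists_isHomogeneousMap_lift R.toResolution RM haug
  have := R.fg
  have : Module.Finite 𝒜.A (RM.toResolution.P 0).M := RM.fg 0
  have hRM0 : (RM.P 0).GenInDeg s := by simpa [hδ] using hRM 0
  have hcomap : (LinearMap.range ι).comap RM.aug.lin = (RM.P 0).rad := by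
    ext x
    rw [Submodule.mem_comap, hι, aug_mem_rad_iff]
  have hrad {n : ℕ} {j : ℤ} (hj : j ≠ δ (n + 1) + s) {y : (R.P n).M} (hy : y ∈ (R.P n).grading j)
      (hfy : f.map n y ∈ (RM.P n).rad) : y ∈ (R.P n).rad :=
    f.mem_rad_of_map_mem_rad hf R.minimal hinj hcomap hRM0 hT RT (hRT (n + 1)) hj hy hfy
  induction n with
  | zero =>
    refine GMod.genInDeg_of_forall_ne_mem_rad fun j hj y hy => hrad hj hy (hcomap.le ?_)
    exact ⟨R.aug.lin y, (f.aug_map_apply y).symm⟩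
  | succ n ih =>
    refine GMod.genInDeg_of_forall_ne_mem_rad fun j hj y hy => ?_
    by_cases hjn : j = δ (n + 1) + s
    · have hdy : (R.d n).lin y ∈ (R.P n).grading (δ (n + 1) + s) := hjn ▸ (R.d n).grad j y hy
      exact mem_rad_of_d_eq_zero (ih.eq_zero_of_mem_rad hdy (R.minimal n ⟨y, rfl⟩))
    · exact hrad hj hy ((hRM (n + 1)).mem_rad hjn ((hf (n + 1)).apply_mem_grading hy))

end MinRes

/-- Truncating a minimal resolution `R` at a degree-preserving surjection of `R_m` onto `W` whose
kernel is the image of the differential gives a minimal resolution of `W`. -/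
def MinRes.truncate {M W : 𝒜.GMod} (R : MinRes M) (m : ℕ) (π : GHom (R.P m) W)
    (hπ : Function.Surjective π.lin) (hker : LinearMap.range (R.d m).lin = LinearMap.ker π.lin) :
    MinRes W where
  P k := R.P (m + k)
  d k := R.d (m + k)
  aug := π
  fg k := R.fg (m + k)
  projective k := R.projective (m + k)
  aug_surj := hπ
  exact_aug := hker
  exact k := R.exact (m + k)
  minimal k := R.minimal (m + k)

theorem GHom.exists_surjective_of_equiv_range {N K W : 𝒜.GMod} (g : GHom N K)
    (e : W.M ≃ₗ[𝒜.A] LinearMap.range g.lin)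
    (he : ∀ j x, x ∈ W.grading j ↔ (e x : K.M) ∈ K.grading j) :
    ∃ π : GHom N W, Function.Surjective π.lin ∧ LinearMap.ker π.lin = LinearMap.ker g.lin := by
  refine ⟨⟨e.symm.toLinearMap ∘ₗ g.lin.rangeRestrict, fun j x hx => ?_⟩,
    e.symm.surjective.comp g.lin.surjective_rangeRestrict, ?_⟩
  · rw [he, LinearMap.comp_apply, LinearEquiv.coe_coe, e.apply_symm_apply]
    exact g.grad j x hx
  · rw [LinearEquiv.ker_comp, LinearMap.ker_rangeRestrict]

theorem IsSyzygy.exists_surjective {M W : 𝒜.GMod} {R : MinRes M} {m : ℕ} (hW : IsSyzygy R m W) :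
    ∃ π : GHom (R.P m) W, Function.Surjective π.lin ∧
      LinearMap.range (R.d m).lin = LinearMap.ker π.lin := by
  match m, hW with
  | 0, ⟨e, he⟩ =>
    refine ⟨⟨e.symm.toLinearMap ∘ₗ R.aug.lin, fun j x hx => ?_⟩,
      e.symm.surjective.comp R.aug_surj, ?_⟩
    · rw [he, LinearMap.comp_apply, LinearEquiv.coe_coe, e.apply_symm_apply]
      exact R.aug.grad j x hx
    · rw [LinearEquiv.ker_comp, R.exact_aug]
  | 1, ⟨e, he⟩ =>
    rw [R.exact 0]
    obtain ⟨π, hπ, hker⟩ :=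
      (R.d 0).exists_surjective_of_equiv_range (e.trans (LinearEquiv.ofEq _ _ R.exact_aug.symm)) he
    exact ⟨π, hπ, hker.symm⟩
  | m + 2, ⟨e, he⟩ =>
    rw [R.exact (m + 1)]
    obtain ⟨π, hπ, hker⟩ := (R.d (m + 1)).exists_surjective_of_equiv_range
      (e.trans (LinearEquiv.ofEq _ _ (R.exact m).symm)) he
    exact ⟨π, hπ, hker.symm⟩

theorem jump_zero (d p : ℕ) : jump d p 0 = 0 := by
  simp [jump]

theorem jump_mul_add {p : ℕ} (hp : 0 < p) (d n k : ℕ) :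
    jump d p (p * n + k) = n * d + jump d p k := by
  simp only [jump, ← Nat.div_eq_sub_mod_div]
  rw [Nat.mul_add_mod, Nat.mul_add_div hp, add_mul, add_assoc]

end GradedAlg

open GradedAlg in
theorem syzygy_pn_sub_one_of_radical_isPKMod_general {F : Type} [Field F] {𝒜 : GradedAlg F}
    {p d : ℕ} (hp : 1 ≤ p) {T : 𝒜.GMod} (hT : IsTrivialGMod T) (hpk : 𝒜.IsPKAlg p d T)
    {M : 𝒜.GMod} {s : ℤ} (hMpk : 𝒜.IsPKMod p d s M) {JM : 𝒜.GMod} (hJM : IsJM M JM)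
    (R : MinRes JM) {n : ℕ} (hn : 1 ≤ n) {W : 𝒜.GMod} (hW : IsSyzygy R (p * n - 1) W) :
    𝒜.IsPKMod p d (n * d + s) W := by
  obtain ⟨RT, hRT⟩ := hpk
  obtain ⟨RM, hRM⟩ := hMpk
  obtain ⟨π, hπ, hker⟩ := hW.exists_surjective
  refine ⟨R.truncate (p * n - 1) π hπ hker, fun k => ?_⟩
  have hR : (R.P (p * n - 1 + k)).GenInDeg (jump d p (p * n - 1 + k + 1) + s) :=
    MinRes.genInDeg_of_isJM (δ := fun m => jump d p m) (by simp [jump_zero]) hT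
      (fun m => by simpa using hRT m) hRM hJM R (p * n - 1 + k)
  have hk : p * n - 1 + k + 1 = p * n + k := by
    have := Nat.mul_pos hp hn
    omega
  have hdeg : (jump d p (p * n - 1 + k + 1) : ℤ) + s = jump d p k + (n * d + s) := by
    rw [hk, jump_mul_add hp]
    push_cast
    ring
  exact hdeg ▸ hR

open GradedAlg in
/-- Let `A` be piecewise-Koszul with graded Jacobson radical `J` and `M` a
piecewise-Koszul module generated in degree `s`.  Then for every `n ≥ 1` the
`(pn−1)`-st syzygy `Ω^{pn−1}(JM)` in a minimal graded projective resolution of `JM`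
is a piecewise-Koszul module. -/
theorem syzygy_pn_sub_one_of_radical_isPKMod
    {F : Type} [Field F] (𝒜 : GradedAlg F) (hA : 𝒜.Standing)
    (p d : ℕ) (hp : 2 ≤ p) (hpd : p ≤ d)
    (T : 𝒜.GMod) (hT : IsTrivialGMod T) (hpk : 𝒜.IsPKAlg p d T)
    (M : 𝒜.GMod) (hfg : Module.Finite 𝒜.A M.M) (s : ℤ)
    (hMs : M.GenInDeg s) (hMpk : 𝒜.IsPKMod p d s M)
    (JM : 𝒜.GMod) (hJM : IsJM M JM)
    (R : MinRes JM) (n : ℕ) (hn : 1 ≤ n)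
    (W : 𝒜.GMod) (hW : IsSyzygy R (p * n - 1) W) :
    ∃ s' : ℤ, 𝒜.IsPKMod p d s' W :=
  ⟨_, syzygy_pn_sub_one_of_radical_isPKMod_general (one_le_two.trans hp) hT hpk hMpk hJM R hn hW⟩
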